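/- arXiv:1111.1011 — 5 statements merged into one kernel-verified Lean document; each statement's English description precedes it below -/
import Mathlib

section
/- Let M=(Q,Γ,Δ,q₀,γ₀) be a DCFS and k∈ℕ, and let M' be the switch-number-recording DCFS constructed from M and k. Then for every state q∈Q: q is k-bounded reachable by M if and only if q is reachable by M'. -/
namespace DCPSFormal

/-- Rules of a dynamic network of concurrent pushdown systems (DCPS):
creation rules `⟨q,γ⟩ → ⟨q',u⟩ ▷ α` (with `α = none` meaning `ε`),
interruption rules `⟨q,γ⟩ ↦ ⟨q',u⟩`, and resumption rules `q ↦ q' ◁ γ`. -/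
inductive Rule (Q Γ : Type*) where
  | cr : Q → Γ → Q → List Γ → Option Γ → Rule Q Γ
  | intr : Q → Γ → Q → List Γ → Rule Q Γ
  | res : Q → Γ → Q → Rule Q Γ

/-- A DCPS: a set of rules, an initial state and an initial stack symbol. -/
structure DCPS (Q Γ : Type*) where
  rules : Set (Rule Q Γ)
  q0 : Q
  γ0 : Γ

/-- Well-formedness of a DCPS: every pushed word has length at most 2. -/
def IsDCPSWf {Q Γ : Type*} (M : DCPS Q Γ) : Prop :=
  ∀ r ∈ M.rules,
    match r with
    | .cr _ _ _ u _ => u.length ≤ 2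
    | .intr _ _ _ u => u.length ≤ 2
    | .res _ _ _ => True

/-- A DCFS is a DCPS in which every pushed word has length at most 1. -/
def IsDCFS {Q Γ : Type*} (M : DCPS Q Γ) : Prop :=
  ∀ r ∈ M.rules,
    match r with
    | .cr _ _ _ u _ => u.length ≤ 1
    | .intr _ _ _ u => u.length ≤ 1
    | .res _ _ _ => True

/-- A configuration of a DCPS: global state, optional active local configuration
(stack content and switch number), and a finitely supported multiset of pending
local configurations. -/
structure Config (Q Γ : Type*) where
  state : Q
  active : Option (List Γ × ℕ)
  idle : (List Γ × ℕ) →₀ ℕ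

/-- The thread possibly spawned by a creation rule with creation component `α`
when the active thread has switch number `i`. -/
noncomputable def spawnOf {Γ : Type*} (α : Option Γ) (i : ℕ) : (List Γ × ℕ) →₀ ℕ :=
  match α with
  | none => 0
  | some a => Finsupp.single ([a], i + 1) 1

/-- The transition system `T(M)` of a DCPS, with steps labelled by rules. -/
inductive Step {Q Γ : Type*} (M : DCPS Q Γ) : Rule Q Γ → Config Q Γ → Config Q Γ → Prop
  | cr {q γ q' u α w i V} :
      Rule.cr q γ q' u α ∈ M.rules →
      Step M (.cr q γ q' u α) ⟨q, some (γ :: w, i), V⟩ ⟨q', some (u ++ w, i), V + spawnOf α i⟩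
  | intr {q γ q' u w i V} :
      Rule.intr q γ q' u ∈ M.rules →
      Step M (.intr q γ q' u) ⟨q, some (γ :: w, i), V⟩
        ⟨q', none, V + Finsupp.single (u ++ w, i + 1) 1⟩
  | res {q γ q' w i V} :
      Rule.res q γ q' ∈ M.rules →
      Step M (.res q γ q') ⟨q, none, V + Finsupp.single (γ :: w, i) 1⟩ ⟨q', some (γ :: w, i), V⟩

/-- `c ∈ Conf_I(M)`: the active thread exists and its switch number lies in `I`. -/
def ActiveIn {Q Γ : Type*} (I : Set ℕ) (c : Config Q Γ) : Prop :=
  ∃ w i, c.active = some (w, i) ∧ i ∈ I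

/-- The `I`-bounded transition system `T_I(M)`. -/
def StepIn {Q Γ : Type*} (M : DCPS Q Γ) (I : Set ℕ) (r : Rule Q Γ) (c c' : Config Q Γ) : Prop :=
  Step M r c c' ∧ (ActiveIn I c ∨ ActiveIn I c')

/-- Reachability in `T(M)`. -/
def Reaches {Q Γ : Type*} (M : DCPS Q Γ) : Config Q Γ → Config Q Γ → Prop :=
  Relation.ReflTransGen (fun a b => ∃ r, Step M r a b)

/-- Reachability in `T_I(M)`. -/
def ReachesIn {Q Γ : Type*} (M : DCPS Q Γ) (I : Set ℕ) : Config Q Γ → Config Q Γ → Prop :=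
  Relation.ReflTransGen (fun a b => ∃ r, StepIn M I r a b)

/-- The initial configuration of a DCPS. -/
noncomputable def initConfig {Q Γ : Type*} (M : DCPS Q Γ) : Config Q Γ :=
  ⟨M.q0, none, Finsupp.single ([M.γ0], 0) 1⟩

/-- `q` is reachable by `M`. -/
def StateReachable {Q Γ : Type*} (M : DCPS Q Γ) (q : Q) : Prop :=
  ∃ c, Reaches M (initConfig M) c ∧ c.active = none ∧ c.state = q

/-- `q` is `k`-bounded reachable by `M`. -/
def KBoundedReachable {Q Γ : Type*} (M : DCPS Q Γ) (k : ℕ) (q : Q) : Prop :=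
  ∃ c, ReachesIn M {i | i ≤ k} (initConfig M) c ∧ c.active = none ∧ c.state = q

/-- `q` is `k`-stratified reachable by `M`. -/
def KStratifiedReachable {Q Γ : Type*} (M : DCPS Q Γ) (k : ℕ) (q : Q) : Prop :=
  ∃ c : ℕ → Config Q Γ, c 0 = initConfig M ∧
    (∀ l ≤ k, ReachesIn M {l} (c l) (c (l + 1))) ∧
    (c (k + 1)).active = none ∧ (c (k + 1)).state = q

/-- A labelled run in a labelled transition system. -/
inductive LRun {C L : Type*} (step : L → C → C → Prop) : List L → C → C → Prop
  | nil (c) : LRun step [] c c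
  | cons {l τ c c' c''} : step l c c' → LRun step τ c' c'' → LRun step (l :: τ) c c''

/-- A pushdown automaton with states `S`, input alphabet `A` and stack alphabet `Γ`. -/
structure PDA (S A Γ : Type*) where
  trans : Set ((S × Γ) × Option A × (S × List Γ))
  p0 : S
  γ0 : Γ
  final : Set S

/-- A single (possibly `ε`-labelled) step of a PDA. -/
inductive PDAStep {S A Γ : Type*} (P : PDA S A Γ) :
    Option A → (S × List Γ) → (S × List Γ) → Prop
  | mk {p γ a p' u w} : ((p, γ), a, (p', u)) ∈ P.trans →
      PDAStep P a (p, γ :: w) (p', u ++ w)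

/-- A run of a PDA labelled by the word obtained by concatenating all non-`ε` labels. -/
inductive PDATrace {S A Γ : Type*} (P : PDA S A Γ) :
    List A → (S × List Γ) → (S × List Γ) → Prop
  | nil (c) : PDATrace P [] c c
  | eps {v c c' c''} : PDAStep P none c c' → PDATrace P v c' c'' → PDATrace P v c c''
  | cons {a v c c' c''} : PDAStep P (some a) c c' → PDATrace P v c' c'' →
      PDATrace P (a :: v) c c''

/-- The language of a PDA (acceptance by final state). -/
def PDALang {S A Γ : Type*} (P : PDA S A Γ) : Set (List A) :=
  { v | ∃ p w, p ∈ P.final ∧ PDATrace P v (P.p0, [P.γ0]) (p, w) }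

/-- A finite state automaton. -/
structure FSA (S A : Type*) where
  trans : Set (S × Option A × S)
  init : Set S
  final : Set S

/-- A run of an FSA labelled by a word (`ε`-labels contribute nothing). -/
inductive FSARun {S A : Type*} (Au : FSA S A) : List A → S → S → Prop
  | nil (s) : FSARun Au [] s s
  | eps {v s s' s''} : (s, none, s') ∈ Au.trans → FSARun Au v s' s'' → FSARun Au v s s''
  | cons {a v s s' s''} : (s, some a, s') ∈ Au.trans → FSARun Au v s' s'' →
      FSARun Au (a :: v) s s''

/-- The language of an FSA. -/
def FSALang {S A : Type*} (Au : FSA S A) : Set (List A) :=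
  { v | ∃ s ∈ Au.init, ∃ s' ∈ Au.final, FSARun Au v s s' }

/-- A vector addition system with states of dimension `n`. -/
structure VASS (n : ℕ) (S A : Type*) where
  δ : S → A → S × (Fin n → ℤ)
  s0 : S
  v0 : Fin n → ℕ

/-- A step of a VASS: `(q₁,u₁) →ᵃ (q₂,u₂)` iff `δ(q₁,a) = (q₂, u₂ - u₁)`. -/
def VStep {n : ℕ} {S A : Type*} (V : VASS n S A) (a : A) :
    (S × (Fin n → ℕ)) → (S × (Fin n → ℕ)) → Prop :=
  fun c c' => (V.δ c.1 a).1 = c'.1 ∧ ∀ i, (c'.2 i : ℤ) = (c.2 i : ℤ) + (V.δ c.1 a).2 i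

/-- Reachability in the transition system of a VASS. -/
def VReaches {n : ℕ} {S A : Type*} (V : VASS n S A) :
    (S × (Fin n → ℕ)) → (S × (Fin n → ℕ)) → Prop :=
  Relation.ReflTransGen (fun c c' => ∃ a, VStep V a c c')

/-- A state `s` is reachable by the VASS `V`. -/
def VStateReachable {n : ℕ} {S A : Type*} (V : VASS n S A) (s : S) : Prop :=
  ∃ u, VReaches V (V.s0, V.v0) (s, u)

/-- The `i`-th unit vector. -/
def unitVec {m : ℕ} (i : Fin m) : Fin m → ℤ := fun j => if j = i then 1 else 0

/-- The `i`-lift of a rule of a DCFS, used to build the switch-number-recording DCFS.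
A stack symbol of the recording system is a pair `(w, i)` with `w ∈ Γ ∪ {ε}`
(modelled as `Option Γ`) and `i` a recorded switch number in `{0,…,k+1}`; the pushed
word `u` of a DCFS rule (of length at most 1) is represented by `u.head? : Option Γ`. -/
def liftRule {Q Γ : Type*} (i : ℕ) : Rule Q Γ → Rule Q (Option Γ × ℕ)
  | .cr q γ q' u α => .cr q (some γ, i) q' [(u.head?, i)] (α.map fun a => (some a, i + 1))
  | .intr q γ q' u => .intr q (some γ, i) q' [(u.head?, i + 1)]
  | .res q γ q' => .res q (some γ, i) q'

/-- The switch-number-recording DCFS `M'` constructed from a DCFS `M` and `k`. -/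
def recordDCFS {Q Γ : Type*} (M : DCPS Q Γ) (k : ℕ) : DCPS Q (Option Γ × ℕ) where
  rules := { r' | ∃ i ≤ k, ∃ r ∈ M.rules, r' = liftRule i r }
  q0 := M.q0
  γ0 := (some M.γ0, 0)

/-!
The rules of a DCFS never increase the height of a stack of height one, so along every run each
local configuration `(w, i)` has `w` of length at most one, and the single symbol
`(w.head?, i)` of the recording system determines it. On such configurations, replacing every
stack by this symbol is a bisimulation: a lifted rule `liftRule i r` fires in the recording system
exactly when `r` fires in `T_{i}(M)`. Since only lifts with `i ≤ k` are rules of the recording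
system, a step of it is the same thing as a step of `T_{[0,k]}(M)`.
-/

theorem reflTransGen_map_iff {α β : Type*} {r : α → α → Prop} {s : β → β → Prop} {f : α → β}
    {P : α → Prop} (hP : ∀ a a', P a → r a a' → P a')
    (hf : ∀ a b, P a → (s (f a) b ↔ ∃ a', r a a' ∧ f a' = b)) {a : α} (ha : P a) {b : β} :
    Relation.ReflTransGen s (f a) b ↔ ∃ a', Relation.ReflTransGen r a a' ∧ f a' = b := by
  have invariant {a' : α} (h : Relation.ReflTransGen r a a') : P a' := by
    induction h with
    | refl => exact ha
    | tail _ hstep ih => exact hP _ _ ih hstep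
  constructor
  · intro h
    induction h with
    | refl => exact ⟨a, .refl, rfl⟩
    | tail _ hstep ih =>
      obtain ⟨a₁, h₁, rfl⟩ := ih
      obtain ⟨a₂, h₂, rfl⟩ := (hf _ _ (invariant h₁)).1 hstep
      exact ⟨a₂, h₁.tail h₂, rfl⟩
  · rintro ⟨a', h, rfl⟩
    induction h with
    | refl => exact .refl
    | tail h₁ h₂ ih => exact ih.tail ((hf _ _ (invariant h₁)).2 ⟨_, h₂, rfl⟩)

theorem exists_eq_add_single_of_mapDomain_eq_add_single {α β : Type*} {f : α → β} {V : α →₀ ℕ}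
    {W : β →₀ ℕ} {y : β} (h : V.mapDomain f = W + Finsupp.single y 1) :
    ∃ U x, V = U + Finsupp.single x 1 ∧ f x = y ∧ U.mapDomain f = W := by
  classical
  have hy : y ∈ (V.mapDomain f).support := by simp [h]
  obtain ⟨x, hx, rfl⟩ := Finset.mem_image.1 (Finsupp.mapDomain_support hy)
  have hle : Finsupp.single x 1 ≤ V :=
    Finsupp.single_le_iff.2 (Nat.one_le_iff_ne_zero.2 (Finsupp.mem_support_iff.1 hx))
  refine ⟨V - Finsupp.single x 1, x, (tsub_add_cancel_of_le hle).symm, rfl, ?_⟩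
  apply add_right_cancel (b := Finsupp.single (f x) 1)
  rw [← h, ← Finsupp.mapDomain_single, ← Finsupp.mapDomain_add, tsub_add_cancel_of_le hle]

section Recording

variable {Q Γ : Type*}

/-- A configuration is flat if the stack of every thread, active or pending, has height at
most one. Flatness is the invariant that a DCFS maintains along its runs. -/
structure Config.Flat (c : Config Q Γ) : Prop where
  active : ∀ x ∈ c.active, x.1.length ≤ 1
  idle : ∀ x ∈ c.idle.support, x.1.length ≤ 1

/-- The local configuration of the recording system that represents a given one: the stack
becomes a single symbol pairing its top (`none` for an empty stack) with the switch number.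
It is faithful only on stacks of height at most one. -/
def recordLocal (x : List Γ × ℕ) : List (Option Γ × ℕ) × ℕ :=
  ([(x.1.head?, x.2)], x.2)

/-- The configuration of the recording system that represents a given one, obtained by
recording every thread. -/
noncomputable def Config.record (c : Config Q Γ) : Config Q (Option Γ × ℕ) :=
  ⟨c.state, c.active.map recordLocal, c.idle.mapDomain recordLocal⟩

theorem mapDomain_recordLocal_spawnOf (α : Option Γ) (i : ℕ) :
    (spawnOf α i).mapDomain recordLocal = spawnOf (α.map fun a => (some a, i + 1)) i := by
  cases α <;> simp [spawnOf, recordLocal]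

theorem record_initConfig (M : DCPS Q Γ) (k : ℕ) :
    (initConfig M).record = initConfig (recordDCFS M k) := by
  simp [Config.record, initConfig, recordDCFS, recordLocal]

theorem eq_of_recordLocal_eq_cons {x : List Γ × ℕ} (hx : x.1.length ≤ 1) {γ : Γ} {i j : ℕ}
    {w : List (Option Γ × ℕ)} (h : recordLocal x = ((some γ, i) :: w, j)) :
    x = ([γ], i) ∧ w = [] ∧ j = i := by
  obtain ⟨_ | ⟨β, _ | _⟩, n⟩ := x <;> grind [recordLocal]

theorem Config.Flat.tail_eq_nil {q : Q} {γ : Γ} {w : List Γ} {i : ℕ} {V : (List Γ × ℕ) →₀ ℕ}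
    (hc : Config.Flat ⟨q, some (γ :: w, i), V⟩) : w = [] := by
  simpa using hc.active _ rfl

theorem flat_initConfig (M : DCPS Q Γ) : (initConfig M).Flat where
  active := by simp [initConfig]
  idle := by simp [initConfig]

theorem length_le_one_of_mem_support_spawnOf {α : Option Γ} {i : ℕ} {x : List Γ × ℕ}
    (hx : x ∈ (spawnOf α i).support) : x.1.length ≤ 1 := by
  cases α with
  | none => simp [spawnOf] at hx
  | some a =>
    obtain rfl := Finset.mem_singleton.1 (Finsupp.support_single_subset hx)
    simp

theorem Config.Flat.step {M : DCPS Q Γ} (hM : IsDCFS M) {r : Rule Q Γ} {c c' : Config Q Γ}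
    (hc : c.Flat) (hs : Step M r c c') : c'.Flat := by
  classical
  cases hs with
  | cr hr =>
    obtain rfl := hc.tail_eq_nil
    refine ⟨by simpa using hM _ hr, fun x hx => ?_⟩
    rcases Finset.mem_union.1 (Finsupp.support_add hx) with hV | hspawn
    · exact hc.idle x hV
    · exact length_le_one_of_mem_support_spawnOf hspawn
  | intr hr =>
    obtain rfl := hc.tail_eq_nil
    refine ⟨by simp, fun x hx => ?_⟩
    rcases Finset.mem_union.1 (Finsupp.support_add hx) with hV | hsingle
    · exact hc.idle x hV
    · obtain rfl := Finset.mem_singleton.1 (Finsupp.support_single_subset hsingle)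
      simpa using hM _ hr
  | res =>
    have hidle := hc.idle
    simp only [Finsupp.support_add_eq_union, Finset.forall_mem_union] at hidle
    exact ⟨by simpa using hidle.2, hidle.1⟩

theorem step_liftRule_record {M : DCPS Q Γ} {M' : DCPS Q (Option Γ × ℕ)} {r : Rule Q Γ} {i : ℕ}
    {c c' : Config Q Γ} (hr' : liftRule i r ∈ M'.rules) (hc : c.Flat) (hs : StepIn M {i} r c c') :
    Step M' (liftRule i r) c.record c'.record := by
  obtain ⟨hs, hi⟩ := hs
  cases hs with
  | cr =>
    obtain rfl := hc.tail_eq_nil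
    obtain rfl : i = _ := by simpa [ActiveIn, eq_comm] using hi
    simpa [Config.record, recordLocal, Finsupp.mapDomain_add, mapDomain_recordLocal_spawnOf]
      using! Step.cr hr'
  | intr =>
    obtain rfl := hc.tail_eq_nil
    obtain rfl : i = _ := by simpa [ActiveIn, eq_comm] using hi
    simpa [Config.record, recordLocal, Finsupp.mapDomain_add] using! Step.intr hr'
  | res =>
    obtain rfl : i = _ := by simpa [ActiveIn, eq_comm] using hi
    simpa [Config.record, recordLocal, Finsupp.mapDomain_add] using! Step.res hr'

theorem exists_stepIn_of_step_liftRule {M : DCPS Q Γ} {M' : DCPS Q (Option Γ × ℕ)} {r : Rule Q Γ}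
    {i : ℕ} {c : Config Q Γ} {d : Config Q (Option Γ × ℕ)} (hr : r ∈ M.rules) (hc : c.Flat)
    (hs : Step M' (liftRule i r) c.record d) : ∃ c', StepIn M {i} r c c' ∧ c'.record = d := by
  obtain ⟨q, a, V⟩ := c
  generalize he : Config.record ⟨q, a, V⟩ = e at hs
  cases r with
  | cr =>
    cases hs
    simp only [Config.record, Config.mk.injEq, Option.map_eq_some_iff] at he
    obtain ⟨rfl, ⟨x, rfl, hx⟩, rfl⟩ := he
    obtain ⟨rfl, rfl, rfl⟩ := eq_of_recordLocal_eq_cons (hc.active x rfl) hx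
    refine ⟨_, ⟨.cr hr, .inl ⟨_, _, rfl, rfl⟩⟩, ?_⟩
    simp [Config.record, recordLocal, Finsupp.mapDomain_add, mapDomain_recordLocal_spawnOf]
  | intr =>
    cases hs
    simp only [Config.record, Config.mk.injEq, Option.map_eq_some_iff] at he
    obtain ⟨rfl, ⟨x, rfl, hx⟩, rfl⟩ := he
    obtain ⟨rfl, rfl, rfl⟩ := eq_of_recordLocal_eq_cons (hc.active x rfl) hx
    refine ⟨_, ⟨.intr hr, .inl ⟨_, _, rfl, rfl⟩⟩, ?_⟩
    simp [Config.record, recordLocal, Finsupp.mapDomain_add]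
  | res =>
    cases hs
    simp only [Config.record, Config.mk.injEq, Option.map_eq_none_iff] at he
    obtain ⟨rfl, rfl, hV⟩ := he
    obtain ⟨U, x, rfl, hx, rfl⟩ := exists_eq_add_single_of_mapDomain_eq_add_single hV
    obtain ⟨rfl, rfl, rfl⟩ := eq_of_recordLocal_eq_cons (hc.idle x (by simp)) hx
    exact ⟨_, ⟨.res hr, .inr ⟨_, _, rfl, rfl⟩⟩, rfl⟩

theorem Step.mem_rules {M : DCPS Q Γ} {r : Rule Q Γ} {c c' : Config Q Γ} (hs : Step M r c c') :
    r ∈ M.rules := by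
  cases hs <;> assumption

theorem stepIn_iff_exists_singleton {M : DCPS Q Γ} {I : Set ℕ} {r : Rule Q Γ}
    {c c' : Config Q Γ} : StepIn M I r c c' ↔ ∃ i ∈ I, StepIn M {i} r c c' := by
  simp only [StepIn, ActiveIn, Set.mem_singleton_iff]
  grind

theorem exists_step_recordDCFS_iff {M : DCPS Q Γ} {k : ℕ} {c : Config Q Γ}
    {d : Config Q (Option Γ × ℕ)} (hc : c.Flat) :
    (∃ r', Step (recordDCFS M k) r' c.record d) ↔
      ∃ c', (∃ r, StepIn M {i | i ≤ k} r c c') ∧ c'.record = d := by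
  constructor
  · rintro ⟨r', hs⟩
    obtain ⟨i, hi, r, hr, rfl⟩ := hs.mem_rules
    obtain ⟨c', hs', rfl⟩ := exists_stepIn_of_step_liftRule hr hc hs
    exact ⟨c', ⟨r, stepIn_iff_exists_singleton.2 ⟨i, hi, hs'⟩⟩, rfl⟩
  · rintro ⟨c', ⟨r, hs⟩, rfl⟩
    obtain ⟨i, hi, hs⟩ := stepIn_iff_exists_singleton.1 hs
    exact ⟨_, step_liftRule_record ⟨i, hi, r, hs.1.mem_rules, rfl⟩ hc hs⟩

theorem reaches_recordDCFS_iff {M : DCPS Q Γ} (hM : IsDCFS M) {k : ℕ} {c : Config Q Γ}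
    {d : Config Q (Option Γ × ℕ)} (hc : c.Flat) :
    Reaches (recordDCFS M k) c.record d ↔
      ∃ c', ReachesIn M {i | i ≤ k} c c' ∧ c'.record = d :=
  reflTransGen_map_iff (P := Config.Flat) (fun _ _ hc ⟨_, hs⟩ => hc.step hM hs.1)
    (fun _ _ hc => exists_step_recordDCFS_iff hc) hc

theorem bsrK_iff_sr_record_general (M : DCPS Q Γ) (hdcfs : IsDCFS M) (k : ℕ) (q : Q) :
    KBoundedReachable M k q ↔ StateReachable (recordDCFS M k) q := by
  simp only [KBoundedReachable, StateReachable, ← record_initConfig,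
    reaches_recordDCFS_iff hdcfs (flat_initConfig M)]
  constructor
  · rintro ⟨c, hc, hactive, rfl⟩
    exact ⟨c.record, ⟨c, hc, rfl⟩, by simp [Config.record, hactive], rfl⟩
  · rintro ⟨_, ⟨c, hc, rfl⟩, hactive, rfl⟩
    exact ⟨c, hc, Option.map_eq_none_iff.1 hactive, rfl⟩

end Recording

/-- For a DCFS `M` and `k ∈ ℕ`, a state `q` is `k`-bounded
reachable by `M` iff `q` is reachable by the switch-number-recording DCFS `M'`. -/
theorem bsrK_iff_sr_record
    (Q Γ : Type) [Fintype Q] [Fintype Γ] (M : DCPS Q Γ)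
    (hfin : M.rules.Finite) (hdcfs : IsDCFS M) (k : ℕ) (q : Q) :
    KBoundedReachable M k q ↔ StateReachable (recordDCFS M k) q :=
  bsrK_iff_sr_record_general M hdcfs k q

end DCPSFormal
end

section
/- Let M=(Q,Γ,Δ,q₀,γ₀) be a DCFS, k∈ℕ, and M' the switch-number-recording DCFS constructed from M and k. For every configuration c of M': if the initial configuration of M' reaches c in T(M'), then Active(c) belongs to {⊥}∪{((w,i),i) : w∈Γ∪{ε}, i∈{0,…,k}} (i.e., the active thread's stack is the single symbol (w,i) and its switch number equals i); Idle(c)((ε,l))=0 for every l∈ℕ (ε the empty stack word); and Idle(c)(((w',i'),j'))=0 for all w'∈Γ∪{ε} and all i',j'∈ℕ with i'≠j'. -/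
namespace DCPSFormal

/-! The stated properties are not inductive: they do not exclude a pending thread with two or more
stack symbols, which a resumption could activate. The inductive strengthening is that *every*
thread is of the form `([(a, i)], i)`. It is preserved because each creation or interruption rule
replaces the only stack symbol by exactly one symbol, stamped with the updated switch number, and
the bound `i ≤ k` holds because only symbols stamped at most `k` can be resumed. -/

/-- A local configuration whose stack is a single symbol recording its own switch number. -/
inductive IsRecordedThread {A : Type*} : List (A × ℕ) × ℕ → Prop
  | mk (a : A) (i : ℕ) : IsRecordedThread ([(a, i)], i)

/-- A rule that, fired by a recorded thread, keeps the record correct. The bound `k` is imposed on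
resumptions only, as these are the steps by which a switch number becomes active. -/
inductive Rule.IsRecording {Q A : Type*} (k : ℕ) : Rule Q (A × ℕ) → Prop
  | cr (q : Q) (a : A) (i : ℕ) (q' : Q) (b : A) (α : Option A) :
      IsRecording k (.cr q (a, i) q' [(b, i)] (α.map fun s => (s, i + 1)))
  | intr (q : Q) (a : A) (i : ℕ) (q' : Q) (b : A) :
      IsRecording k (.intr q (a, i) q' [(b, i + 1)])
  | res (q : Q) (a : A) {i : ℕ} (hi : i ≤ k) (q' : Q) : IsRecording k (.res q (a, i) q')

/-- A DCPS whose stack symbols record switch numbers, with active switch numbers bounded by `k`;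
`recordDCFS M k` is the motivating example. -/
structure DCPS.IsRecording {Q A : Type*} (k : ℕ) (N : DCPS Q (A × ℕ)) : Prop where
  rules : ∀ r ∈ N.rules, r.IsRecording k
  γ0_snd : N.γ0.2 = 0

/-- The inductive invariant: all threads are recorded, and the active one has switch number at
most `k`. -/
structure Config.IsRecorded {Q A : Type*} (k : ℕ) (c : Config Q (A × ℕ)) : Prop where
  active : ∀ t ∈ c.active, IsRecordedThread t ∧ t.2 ≤ k
  idle : ∀ t ∈ c.idle.support, IsRecordedThread t

theorem forall_mem_support_add {ι R : Type*} [AddCommMonoid R] [Subsingleton (AddUnits R)]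
    {P : ι → Prop} {V W : ι →₀ R} :
    (∀ t ∈ (V + W).support, P t) ↔ (∀ t ∈ V.support, P t) ∧ ∀ t ∈ W.support, P t := by
  simp only [Finsupp.mem_support_iff, Finsupp.add_apply, ne_eq, add_eq_zero, not_and_or, or_imp,
    forall_and]

theorem forall_mem_support_single {ι R : Type*} [Zero R] {P : ι → Prop} {t : ι} {x : R}
    (hx : x ≠ 0) : (∀ s ∈ (Finsupp.single t x).support, P s) ↔ P t := by
  simp only [Finsupp.mem_support_single, hx, ne_eq, not_false_eq_true, and_true, forall_eq]

theorem forall_mem_support_spawnOf {Γ : Type*} {P : List Γ × ℕ → Prop} {α : Option Γ} {i : ℕ} :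
    (∀ t ∈ (spawnOf α i).support, P t) ↔ ∀ a ∈ α, P ([a], i + 1) := by
  cases α <;> simp [spawnOf]

section Invariant

variable {Q A : Type*} {k : ℕ} {N : DCPS Q (A × ℕ)} {c c' : Config Q (A × ℕ)}

theorem DCPS.IsRecording.initConfig_isRecorded (hN : N.IsRecording k) :
    (initConfig N).IsRecorded k where
  active t ht := nomatch ht
  idle := by
    have hγ : N.γ0 = (N.γ0.1, 0) := Prod.ext rfl hN.γ0_snd
    rw [initConfig, hγ]
    exact (forall_mem_support_single one_ne_zero).2 (.mk _ 0)

theorem Config.IsRecorded.step (hc : c.IsRecorded k) (hN : N.IsRecording k)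
    {r : Rule Q (A × ℕ)} (h : Step N r c c') : c'.IsRecorded k := by
  obtain ⟨hactive, hidle⟩ := hc
  cases h with
  | cr hr =>
    cases hN.rules _ hr with
    | cr q a _ q' b α =>
      obtain ⟨⟨⟩, hi⟩ := hactive _ rfl
      refine ⟨?_, forall_mem_support_add.2 ⟨hidle, forall_mem_support_spawnOf.2 ?_⟩⟩
      · rintro _ ⟨⟩
        exact ⟨.mk b _, hi⟩
      · intro _ hs
        obtain ⟨s, -, rfl⟩ := Option.mem_map.1 hs
        exact .mk s _
  | intr hr =>
    cases hN.rules _ hr with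
    | intr q a _ q' b =>
      obtain ⟨⟨⟩, -⟩ := hactive _ rfl
      exact ⟨nofun, forall_mem_support_add.2
        ⟨hidle, (forall_mem_support_single one_ne_zero).2 (.mk b _)⟩⟩
  | res hr =>
    cases hN.rules _ hr with
    | res q a hi q' =>
      obtain ⟨hV, hresumed⟩ := forall_mem_support_add.1 hidle
      obtain ⟨⟩ := (forall_mem_support_single one_ne_zero).1 hresumed
      refine ⟨?_, hV⟩
      rintro _ ⟨⟩
      exact ⟨.mk a _, hi⟩

theorem Config.IsRecorded.reaches (hc : c.IsRecorded k) (hN : N.IsRecording k)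
    (h : Reaches N c c') : c'.IsRecorded k := by
  induction h with
  | refl => exact hc
  | tail _ hstep ih =>
    obtain ⟨r, hr⟩ := hstep
    exact ih.step hN hr

theorem Config.IsRecorded.active_eq (hc : c.IsRecorded k) :
    c.active = none ∨ ∃ a i, i ≤ k ∧ c.active = some ([(a, i)], i) := by
  cases hactive : c.active with
  | none => exact .inl rfl
  | some t =>
    obtain ⟨⟨a, i⟩, hi⟩ := hc.active t hactive
    exact .inr ⟨a, i, hi, rfl⟩

theorem Config.IsRecorded.idle_eq_zero (hc : c.IsRecorded k) {t : List (A × ℕ) × ℕ}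
    (ht : ¬ IsRecordedThread t) : c.idle t = 0 :=
  Finsupp.notMem_support_iff.1 (mt (hc.idle t) ht)

theorem record_reachable_invariant_general (hN : N.IsRecording k)
    (hreach : Reaches N (initConfig N) c) :
    (c.active = none ∨ ∃ a i, i ≤ k ∧ c.active = some ([(a, i)], i)) ∧
    (∀ l, c.idle ([], l) = 0) ∧
    (∀ a i j, i ≠ j → c.idle ([(a, i)], j) = 0) := by
  have hc : c.IsRecorded k := hN.initConfig_isRecorded.reaches hN hreach
  refine ⟨hc.active_eq, fun l => hc.idle_eq_zero nofun, fun a i j hij => hc.idle_eq_zero ?_⟩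
  rintro ⟨⟩
  exact hij rfl

end Invariant

theorem Rule.isRecording_liftRule {Q Γ : Type*} {i k : ℕ} (hi : i ≤ k) (r : Rule Q Γ) :
    (liftRule i r).IsRecording k := by
  cases r with
  | cr q γ q' u α =>
    have h : Rule.IsRecording k _ := .cr q (some γ) i q' u.head? (α.map some)
    rwa [Option.map_map] at h
  | intr q γ q' u => exact .intr q (some γ) i q' u.head?
  | res q γ q' => exact .res q (some γ) hi q'

theorem recordDCFS_isRecording {Q Γ : Type*} (M : DCPS Q Γ) (k : ℕ) :
    (recordDCFS M k).IsRecording k where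
  rules := by
    rintro _ ⟨i, hi, r, -, rfl⟩
    exact Rule.isRecording_liftRule hi r
  γ0_snd := rfl

/-- Invariant of reachable configurations of the
switch-number-recording DCFS `M'`: the active thread (if any) has stack a single
symbol `(w,i)` with switch number exactly `i ≤ k`; no pending thread has empty
stack; and every pending thread with stack symbol `(w',i')` has switch number `i'`. -/
theorem record_reachable_invariant
    (Q Γ : Type) [Fintype Q] [Fintype Γ] (M : DCPS Q Γ)
    (hfin : M.rules.Finite) (hdcfs : IsDCFS M) (k : ℕ)
    (c : Config Q (Option Γ × ℕ))
    (hreach : Reaches (recordDCFS M k) (initConfig (recordDCFS M k)) c) :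
    (c.active = none ∨ ∃ (w : Option Γ) (i : ℕ), i ≤ k ∧ c.active = some ([(w, i)], i)) ∧
    (∀ l : ℕ, c.idle ([], l) = 0) ∧
    (∀ (w' : Option Γ) (i' j' : ℕ), i' ≠ j' → c.idle ([(w', i')], j') = 0) :=
  record_reachable_invariant_general (recordDCFS_isRecording M k) hreach

end DCPSFormal
end

section
/- Let M=(Q,Γ,Δ,q₀,γ₀) be a DCFS with Γ={γ₀,…,γ_n}, V the VASS constructed from M, and μ the simulation map from configurations of M to configurations of V. If c_init^M→*c in T(M) via a run labelled by the word τ over Δ, then ((q₀,⊥),u₀)→*μ(c) in T(V) via a run labelled by the same word τ. -/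
namespace DCPSFormal

/-- States of the VASS constructed from a DCFS: either the halting state `p_halt`,
or a pair of a global state of the DCFS and the stack content of the active thread
(`none` = no active thread, `some w` with `w ∈ Γ ∪ {ε}` modelled as `Option Γ`). -/
inductive VState (Q Γ : Type*) where
  | halt : VState Q Γ
  | st : Q → Option (Option Γ) → VState Q Γ

/-- The counter coordinate associated with a stack content `w ∈ Γ ∪ {ε}`:
symbol `γ_j` gets coordinate `j` and `ε` gets the last coordinate. -/
def coordOf {n : ℕ} : Option (Fin (n + 1)) → Fin (n + 2)
  | some γ => γ.castSucc
  | none => Fin.last (n + 1)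

/-- The VASS constructed from a DCFS `M` over states `Q` and stack alphabet
`Γ = {γ₀,…,γ_n}` (modelled as `Fin (n+1)`); its dimension is `n + 2`, its alphabet is
the set of rules, and all remaining cases of the displacement function go to `p_halt`. -/
def vassOf {n : ℕ} {Q : Type*} [DecidableEq Q] (M : DCPS Q (Fin (n + 1)))
    [DecidablePred (· ∈ M.rules)] :
    VASS (n + 2) (VState Q (Fin (n + 1))) (Rule Q (Fin (n + 1))) where
  δ := fun s t =>
    match s, t with
    | .st q (some (some γ)), .cr q₁ γ₁ q' u α =>
        if Rule.cr q₁ γ₁ q' u α ∈ M.rules ∧ q₁ = q ∧ γ₁ = γ then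
          (.st q' (some u.head?),
            match α with
            | none => 0
            | some a => unitVec (coordOf (some a)))
        else (.halt, 0)
    | .st q (some (some γ)), .intr q₁ γ₁ q' u =>
        if Rule.intr q₁ γ₁ q' u ∈ M.rules ∧ q₁ = q ∧ γ₁ = γ then
          (.st q' none, unitVec (coordOf u.head?))
        else (.halt, 0)
    | .st q none, .res q₁ γ q' =>
        if Rule.res q₁ γ q' ∈ M.rules ∧ q₁ = q then
          (.st q' (some (some γ)), - unitVec (coordOf (some γ)))
        else (.halt, 0)
    | _, _ => (.halt, 0)
  s0 := .st M.q0 none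
  v0 := fun i => if i = coordOf (some M.γ0) then 1 else 0

/-- The number of pending threads of a configuration with a given stack content
(summed over all switch numbers). -/
noncomputable def countStack {Q Γ : Type*} [DecidableEq Γ] (c : Config Q Γ)
    (w : List Γ) : ℕ :=
  c.idle.sum fun loc m => if loc.1 = w then m else 0

/-- The simulation map `μ` from configurations of the DCFS `M` to configurations
of the VASS constructed from `M`. -/
noncomputable def muV {Q : Type*} {n : ℕ} (c : Config Q (Fin (n + 1))) :
    VState Q (Fin (n + 1)) × (Fin (n + 2) → ℕ) :=
  ((match c.active with
    | none => .st c.state none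
    | some (w, _) => .st c.state (some w.head?)),
   fun i => if h : (i : ℕ) < n + 1 then countStack c [⟨(i : ℕ), h⟩] else countStack c [])

/-! Since a DCFS pushes at most one symbol at a time, every thread of a reachable configuration has
a stack of length at most `1`, and its content is one of the `n + 2` words that the counters of the
VASS keep track of. On such configurations `μ` turns each step into the VASS step with the same
label: adding a pending thread with content `w` increments exactly the counter of `w`, and a
resumption is read backwards, its source having one pending thread more than its target. -/

theorem LRun.map_of_invariant {C D L : Type*} {s : L → C → C → Prop} {t : L → D → D → Prop}
    {I : C → Prop} {f : C → D} (hI : ∀ ⦃l c c'⦄, s l c c' → I c → I c')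
    (hf : ∀ ⦃l c c'⦄, s l c c' → I c → t l (f c) (f c')) {τ : List L} {c c' : C}
    (hrun : LRun s τ c c') (hc : I c) : LRun t τ (f c) (f c') := by
  induction hrun with
  | nil c => exact .nil _
  | cons hstep _ ih => exact .cons (hf hstep hc) (ih (hI hstep hc))

theorem forall_mem_support_add_single {α R : Type*} [AddZeroClass R] {f : α →₀ R} {a : α} {b : R}
    {p : α → Prop} (hf : ∀ x ∈ f.support, p x) (ha : p a) :
    ∀ x ∈ (f + Finsupp.single a b).support, p x := by
  classical
  intro x hx
  rcases Finset.mem_union.1 (Finsupp.support_add hx) with h | h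
  · exact hf x h
  · rwa [Finset.mem_singleton.1 (Finsupp.support_single_subset h)]

section ShortStacks

variable {Q Γ : Type*}

/-- All threads of `c`, active or pending, have stack content in `Γ ∪ {ε}`: the invariant of the
runs of a DCFS under which `μ` is a simulation. -/
structure ShortStacks (c : Config Q Γ) : Prop where
  active : ∀ t ∈ c.active, t.1.length ≤ 1
  idle : ∀ t ∈ c.idle.support, t.1.length ≤ 1

theorem shortStacks_initConfig (M : DCPS Q Γ) : ShortStacks (initConfig M) where
  active := by simp [initConfig]
  idle := by
    intro t ht
    rw [Finset.mem_singleton.1 (Finsupp.support_single_subset ht)]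
    simp

theorem Step.shortStacks {M : DCPS Q Γ} (hM : IsDCFS M) {r : Rule Q Γ} {c c' : Config Q Γ}
    (h : Step M r c c') (hc : ShortStacks c) : ShortStacks c' := by
  cases h with
  | @cr q γ q' u α w i V hr =>
    obtain rfl : w = [] := by simpa using hc.active _ rfl
    have hu : u.length ≤ 1 := hM _ hr
    refine ⟨by simpa using hu, ?_⟩
    cases α with
    | none => simpa [spawnOf] using hc.idle
    | some a => exact forall_mem_support_add_single hc.idle (by simp)
  | @intr q γ q' u w i V hr =>
    obtain rfl : w = [] := by simpa using hc.active _ rfl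
    have hu : u.length ≤ 1 := hM _ hr
    exact ⟨by simp, forall_mem_support_add_single hc.idle (by simpa using hu)⟩
  | @res q γ q' w i V hr =>
    refine ⟨?_, fun t ht => hc.idle t (Finsupp.support_mono le_self_add ht)⟩
    simpa using hc.idle (γ :: w, i) (by simp)

end ShortStacks

section SimulationMap

variable {Q : Type*} {n : ℕ}

/-- The stack content counted by coordinate `j` of the constructed VASS; inverse to `coordOf`, with
contents in `Γ ∪ {ε}` written as words. -/
def stackAt (j : Fin (n + 2)) : List (Fin (n + 1)) :=
  Fin.lastCases [] (fun γ => [γ]) j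

theorem eq_stackAt_iff {w : List (Fin (n + 1))} (hw : w.length ≤ 1) (j : Fin (n + 2)) :
    w = stackAt j ↔ j = coordOf w.head? := by
  match w, hw with
  | [], _ => cases j using Fin.lastCases <;> simp [stackAt, coordOf]
  | [γ], _ => cases j using Fin.lastCases <;> simp [stackAt, coordOf, eq_comm]

theorem countStack_eq_mapDomain {Γ : Type*} [DecidableEq Γ] (c : Config Q Γ) (w : List Γ) :
    countStack c w = c.idle.mapDomain Prod.fst w := by
  simp [countStack, Finsupp.mapDomain, Finsupp.sum_apply, Finsupp.single_apply]

theorem muV_snd_apply (c : Config Q (Fin (n + 1))) (j : Fin (n + 2)) :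
    (muV c).2 j = c.idle.mapDomain Prod.fst (stackAt j) := by
  rw [← countStack_eq_mapDomain]
  cases j using Fin.lastCases with
  | last => simp [muV, stackAt]
  | cast γ =>
    rw [stackAt, Fin.lastCases_castSucc]
    exact dif_pos γ.isLt

theorem muV_snd_congr {c c' : Config Q (Fin (n + 1))} (h : c'.idle = c.idle) :
    (muV c').2 = (muV c).2 := by
  funext j
  rw [muV_snd_apply, muV_snd_apply, h]

theorem muV_snd_of_idle_eq_add_single {c c' : Config Q (Fin (n + 1))} {w : List (Fin (n + 1))}
    {i : ℕ} (hw : w.length ≤ 1) (h : c'.idle = c.idle + Finsupp.single (w, i) 1) :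
    (muV c').2 = (muV c).2 + Pi.single (coordOf w.head?) 1 := by
  funext j
  simp only [muV_snd_apply, h, Finsupp.mapDomain_add, Finsupp.mapDomain_single, Finsupp.add_apply,
    Finsupp.single_apply, eq_stackAt_iff hw, Pi.add_apply, Pi.single_apply]

theorem muV_initConfig [DecidableEq Q] (M : DCPS Q (Fin (n + 1))) [DecidablePred (· ∈ M.rules)] :
    muV (initConfig M) = ((vassOf M).s0, (vassOf M).v0) := by
  refine Prod.ext rfl (funext fun j => ?_)
  simp [muV_snd_apply, initConfig, Finsupp.mapDomain_single, Finsupp.single_apply, eq_stackAt_iff,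
    vassOf]

end SimulationMap

section VStep

variable {m : ℕ} {S A : Type*} {V : VASS m S A} {a : A} {c c' : S × (Fin m → ℕ)}

theorem vStep_of_δ_eq_zero (hδ : V.δ c.1 a = (c'.1, 0)) (hv : c'.2 = c.2) : VStep V a c c' := by
  simp [VStep, hδ, hv]

theorem vStep_of_δ_eq_unitVec {k : Fin m} (hδ : V.δ c.1 a = (c'.1, unitVec k))
    (hv : c'.2 = c.2 + Pi.single k 1) : VStep V a c c' := by
  simp [VStep, hδ, hv, unitVec, Pi.single_apply]

theorem vStep_of_δ_eq_neg_unitVec {k : Fin m} (hδ : V.δ c.1 a = (c'.1, -unitVec k))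
    (hv : c.2 = c'.2 + Pi.single k 1) : VStep V a c c' := by
  simp [VStep, hδ, hv, unitVec, Pi.single_apply]

end VStep

section Simulation

variable {Q : Type*} {n : ℕ} [DecidableEq Q] {M : DCPS Q (Fin (n + 1))}
  [DecidablePred (· ∈ M.rules)] {q q' : Q} {γ : Fin (n + 1)} {u : List (Fin (n + 1))}

theorem vassOf_δ_cr_none (hr : Rule.cr q γ q' u none ∈ M.rules) :
    (vassOf M).δ (.st q (some (some γ))) (.cr q γ q' u none) = (.st q' (some u.head?), 0) :=
  if_pos ⟨hr, rfl, rfl⟩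

theorem vassOf_δ_cr_some {a : Fin (n + 1)} (hr : Rule.cr q γ q' u (some a) ∈ M.rules) :
    (vassOf M).δ (.st q (some (some γ))) (.cr q γ q' u (some a)) =
      (.st q' (some u.head?), unitVec (coordOf (some a))) :=
  if_pos ⟨hr, rfl, rfl⟩

theorem vassOf_δ_intr (hr : Rule.intr q γ q' u ∈ M.rules) :
    (vassOf M).δ (.st q (some (some γ))) (.intr q γ q' u) =
      (.st q' none, unitVec (coordOf u.head?)) :=
  if_pos ⟨hr, rfl, rfl⟩

theorem vassOf_δ_res (hr : Rule.res q γ q' ∈ M.rules) :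
    (vassOf M).δ (.st q none) (.res q γ q') =
      (.st q' (some (some γ)), -unitVec (coordOf (some γ))) :=
  if_pos ⟨hr, rfl⟩

theorem Step.vStep_muV (hM : IsDCFS M) {r : Rule Q (Fin (n + 1))} {c c' : Config Q (Fin (n + 1))}
    (h : Step M r c c') (hc : ShortStacks c) : VStep (vassOf M) r (muV c) (muV c') := by
  cases h with
  | @cr q γ q' u α w i V hr =>
    obtain rfl : w = [] := by simpa using hc.active _ rfl
    rw [List.append_nil]
    cases α with
    | none => exact vStep_of_δ_eq_zero (vassOf_δ_cr_none hr) (muV_snd_congr (add_zero V))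
    | some a =>
      exact vStep_of_δ_eq_unitVec (vassOf_δ_cr_some hr)
        (muV_snd_of_idle_eq_add_single (w := [a]) (by simp) rfl)
  | @intr q γ q' u w i V hr =>
    obtain rfl : w = [] := by simpa using hc.active _ rfl
    have hu : u.length ≤ 1 := hM _ hr
    rw [List.append_nil]
    exact vStep_of_δ_eq_unitVec (vassOf_δ_intr hr) (muV_snd_of_idle_eq_add_single hu rfl)
  | @res q γ q' w i V hr =>
    obtain rfl : w = [] := by simpa using hc.idle (γ :: w, i) (by simp)
    exact vStep_of_δ_eq_neg_unitVec (vassOf_δ_res hr)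
      (muV_snd_of_idle_eq_add_single (w := [γ]) (by simp) rfl)

end Simulation

theorem vass_simulates_dcfs_general {n : ℕ} {Q : Type*} [DecidableEq Q]
    {M : DCPS Q (Fin (n + 1))} [DecidablePred (· ∈ M.rules)] (hdcfs : IsDCFS M)
    {τ : List (Rule Q (Fin (n + 1)))} {c : Config Q (Fin (n + 1))}
    (hrun : LRun (Step M) τ (initConfig M) c) :
    LRun (VStep (vassOf M)) τ ((vassOf M).s0, (vassOf M).v0) (muV c) := by
  rw [← muV_initConfig]
  exact LRun.map_of_invariant (s := Step M) (I := ShortStacks)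
    (fun _ _ _ h => h.shortStacks hdcfs) (fun _ _ _ h => h.vStep_muV hdcfs) hrun
    (shortStacks_initConfig M)

/-- Every run of the DCFS `M` labelled by a word `τ` of rules is
simulated by a run of the constructed VASS labelled by the same word, ending in `μ(c)`. -/
theorem vass_simulates_dcfs
    (n : ℕ) (Q : Type) [Fintype Q] [DecidableEq Q]
    (M : DCPS Q (Fin (n + 1))) [DecidablePred (· ∈ M.rules)]
    (hfin : M.rules.Finite) (hdcfs : IsDCFS M)
    (τ : List (Rule Q (Fin (n + 1)))) (c : Config Q (Fin (n + 1)))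
    (hrun : LRun (Step M) τ (initConfig M) c) :
    LRun (VStep (vassOf M)) τ ((vassOf M).s0, (vassOf M).v0) (muV c) :=
  vass_simulates_dcfs_general hdcfs hrun

end DCPSFormal
end

section
/- For every n∈ℕ, consider the PDA P=({p₀,p₁,p₂},{a},{⊥,γ₀,…,γ_n},Δ,p₀,⊥,{p₂}) whose transition relation Δ consists exactly of: ⟨p₀,⊥⟩→^{ε}⟨p₁,γ₀⊥⟩; for every i∈{0,…,n−1}, ⟨p₁,γ_i⟩→^{ε}⟨p₁,γ_{i+1}γ_{i+1}⟩; ⟨p₁,γ_n⟩→^{a}⟨p₁,ε⟩; and ⟨p₁,⊥⟩→^{ε}⟨p₂,ε⟩. Then L(P)={a^{2^n}}, the language containing only the word consisting of 2^n copies of the letter a. -/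
namespace DCPSFormal

/-- The doubling PDA witnessing the exponential succinctness of PDAs: states
`p₀ = 0, p₁ = 1, p₂ = 2`, one-letter input alphabet `Unit`, stack alphabet
`{⊥, γ₀, …, γ_n}` modelled as `Option (Fin (n+1))` with `⊥ = none`. -/
def doublingPDA (n : ℕ) : PDA (Fin 3) Unit (Option (Fin (n + 1))) where
  trans :=
    { t | t = (((0 : Fin 3), (none : Option (Fin (n + 1)))), (none : Option Unit),
               ((1 : Fin 3), [some 0, none])) ∨
          (∃ i : Fin n, t = (((1 : Fin 3), some i.castSucc), (none : Option Unit),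
               ((1 : Fin 3), [some i.succ, some i.succ]))) ∨
          t = (((1 : Fin 3), some (Fin.last n)), some (), ((1 : Fin 3), [])) ∨
          t = (((1 : Fin 3), (none : Option (Fin (n + 1)))), (none : Option Unit),
               ((2 : Fin 3), [])) }
  p0 := 0
  γ0 := none
  final := {2}

/-! Every configuration `c` of `doublingPDA n` determines the only word that can still be read on
the way from `c` to `p₂`: popping `γ_i` reads `a^{2^(n-i)}`, since `γ_i` is either replaced by two
copies of `γ_{i+1}` or, for `i = n`, consumes one letter, and `⊥` reads nothing. A run labelled by
`v` strips the prefix `v` from this residual word, so an accepted word is the residual word of the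
initial configuration. -/

section PDA

variable {S A Γ : Type*} {P : PDA S A Γ}

theorem PDATrace.trans {v v' : List A} {c c' c'' : S × List Γ} (h : PDATrace P v c c')
    (h' : PDATrace P v' c' c'') : PDATrace P (v ++ v') c c'' := by
  induction h with
  | nil => exact h'
  | eps hstep _ ih => exact .eps hstep (ih h')
  | cons hstep _ ih => exact .cons hstep (ih h')

/-- A residual of `P` assigns to every configuration a word from which each step removes its label
as a prefix. Such an assignment determines the label of a run from its two endpoints. -/
def IsResidual (P : PDA S A Γ) (r : S × List Γ → List A) : Prop :=
  ∀ a c c', PDAStep P a c c' → r c = a.toList ++ r c'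

theorem IsResidual.eq_append_of_trace {r : S × List Γ → List A} (hr : IsResidual P r)
    {v : List A} {c c' : S × List Γ} (h : PDATrace P v c c') : r c = v ++ r c' := by
  induction h with
  | nil => rfl
  | eps hstep _ ih => exact (hr _ _ _ hstep).trans ih
  | cons hstep _ ih => exact (hr _ _ _ hstep).trans (congrArg _ ih)

theorem IsResidual.pdaLang_subset_singleton {r : S × List Γ → List A} (hr : IsResidual P r)
    (hfinal : ∀ p ∈ P.final, ∀ w, r (p, w) = []) : PDALang P ⊆ {r (P.p0, [P.γ0])} := by
  rintro v ⟨p, w, hp, h⟩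
  rw [Set.mem_singleton_iff, hr.eq_append_of_trace h, hfinal p hp w, List.append_nil]

end PDA

namespace doublingPDA

variable {n : ℕ}

theorem step_start (w : List (Option (Fin (n + 1)))) :
    PDAStep (doublingPDA n) none (0, none :: w) (1, some 0 :: none :: w) :=
  .mk (u := [some 0, none]) (Or.inl rfl)

theorem step_double (i : Fin n) (w : List (Option (Fin (n + 1)))) :
    PDAStep (doublingPDA n) none (1, some i.castSucc :: w) (1, some i.succ :: some i.succ :: w) :=
  .mk (u := [some i.succ, some i.succ]) (Or.inr (.inl ⟨i, rfl⟩))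

theorem step_read (w : List (Option (Fin (n + 1)))) :
    PDAStep (doublingPDA n) (some ()) (1, some (Fin.last n) :: w) (1, w) :=
  .mk (u := []) (Or.inr (.inr (.inl rfl)))

theorem step_finish (w : List (Option (Fin (n + 1)))) :
    PDAStep (doublingPDA n) none (1, none :: w) (2, w) :=
  .mk (u := []) (Or.inr (.inr (.inr rfl)))

/-- The word `a^{2^(n-i)}` read while the stack symbol `γ_i` is popped. -/
def popWord (i : Fin (n + 1)) : List Unit :=
  List.replicate (2 ^ (n - i.val)) ()

theorem popWord_last : popWord (Fin.last n) = [()] := by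
  simp [popWord]

theorem popWord_castSucc (i : Fin n) :
    popWord i.castSucc = popWord i.succ ++ popWord i.succ := by
  have hexp : n - i.val = n - (i.val + 1) + 1 := by omega
  simp only [popWord, Fin.val_castSucc, Fin.val_succ, List.replicate_append_replicate]
  rw [hexp, pow_succ, mul_two]

theorem trace_popWord (i : Fin (n + 1)) (w : List (Option (Fin (n + 1)))) :
    PDATrace (doublingPDA n) (popWord i) (1, some i :: w) (1, w) := by
  induction i using Fin.reverseInduction generalizing w with
  | last =>
    rw [popWord_last]
    exact .cons (step_read w) (.nil _)
  | cast i ih =>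
    rw [popWord_castSucc]
    exact .eps (step_double i w) ((ih (some i.succ :: w)).trans (ih w))

theorem popWord_zero_mem_pdaLang :
    popWord (0 : Fin (n + 1)) ∈ PDALang (doublingPDA n) := by
  have hpop : PDATrace (doublingPDA n) (popWord 0) (1, [some 0, none]) (1, [none]) :=
    trace_popWord 0 [none]
  have hfinish : PDATrace (doublingPDA n) [] (1, [none]) (2, []) :=
    .eps (step_finish []) (.nil _)
  refine ⟨2, [], rfl, .eps (step_start []) ?_⟩
  simpa only [List.append_nil] using hpop.trans hfinish

/-- The word read in state `p₁` while the stack is popped down to its first `⊥`. What lies below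
that `⊥` contributes nothing, because popping `⊥` leads to `p₂`, where no transition applies. -/
def stackWord : List (Option (Fin (n + 1))) → List Unit
  | [] => []
  | none :: _ => []
  | some i :: w => popWord i ++ stackWord w

/-- The word still to be read on the way from a configuration to `p₂`. -/
def residual : Fin 3 × List (Option (Fin (n + 1))) → List Unit
  | (0, _) => popWord (0 : Fin (n + 1))
  | (1, w) => stackWord w
  | (2, _) => []

theorem isResidual_residual : IsResidual (doublingPDA n) residual := by
  rintro _ _ _ ⟨h⟩
  rcases h with h | ⟨i, h⟩ | h | h <;> cases h
  · simp [residual, stackWord]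
  · simp [residual, stackWord, popWord_castSucc]
  · simp [residual, stackWord, popWord_last]
  · simp [residual, stackWord]

end doublingPDA

/-- The language of the doubling PDA is the singleton `{a^{2^n}}`. -/
theorem doublingPDA_lang (n : ℕ) :
    PDALang (doublingPDA n) = {List.replicate (2 ^ n) ()} := by
  have hfinal : ∀ p ∈ (doublingPDA n).final, ∀ w,
      doublingPDA.residual (n := n) (p, w) = [] := by
    rintro _ rfl _
    rfl
  exact (doublingPDA.isResidual_residual.pdaLang_subset_singleton hfinal).antisymm
    (Set.singleton_subset_iff.2 doublingPDA.popWord_zero_mem_pdaLang)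

end DCPSFormal
end

section
/- For every n∈ℕ, every finite state automaton A over the one-letter alphabet {a} with L(A)={a^m : 0 ≤ m ≤ 2^n} has at least 2^n states. (The language {a^m : 0 ≤ m ≤ 2^n} is the downward closure of the singleton language {a^{2^n}} with respect to the subword relation.) -/
namespace DCPSFormal

/-! Along a run on `w`, choose a state visited at each of the `w.length + 1` cut positions of `w`.
If there are at most `w.length` states, two positions `i < j` share one, so the part of the run up
to `j` can be glued to the part from `i` on, repeating the letters in between. Hence an automaton
whose language has a longest word `w` has more than `w.length` states.

Mathlib's `εNFA.pumping_lemma` goes through the subset construction and would only give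
`w.length < 2 ^ card S`. -/

section

variable {S A : Type*} {Au : FSA S A}

theorem FSARun.append {u v : List A} {s q t : S} (hu : FSARun Au u s q) (hv : FSARun Au v q t) :
    FSARun Au (u ++ v) s t := by
  induction hu with
  | nil => exact hv
  | eps htrans _ ih => exact .eps htrans (ih hv)
  | cons htrans _ ih => exact .cons htrans (ih hv)

theorem FSARun.exists_of_append {u v : List A} {s t : S} (h : FSARun Au (u ++ v) s t) :
    ∃ q, FSARun Au u s q ∧ FSARun Au v q t := by
  generalize hw : u ++ v = w at h
  induction h generalizing u with
  | nil s =>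
    obtain ⟨rfl, rfl⟩ := List.append_eq_nil_iff.1 hw
    exact ⟨s, .nil s, .nil s⟩
  | eps htrans _ ih =>
    obtain ⟨q, hu, hv⟩ := ih hw
    exact ⟨q, .eps htrans hu, hv⟩
  | @cons a w s s' t htrans hrun ih =>
    rcases List.append_eq_cons_iff.1 hw with ⟨rfl, rfl⟩ | ⟨u, rfl, rfl⟩
    · exact ⟨s, .nil s, .cons htrans hrun⟩
    · obtain ⟨q, hu, hv⟩ := ih rfl
      exact ⟨q, .cons htrans hu, hv⟩

theorem FSARun.exists_longer_of_card_le_length [Fintype S] {w : List A} {s t : S}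
    (h : FSARun Au w s t) (hcard : Fintype.card S ≤ w.length) :
    ∃ v, w.length < v.length ∧ FSARun Au v s t := by
  have hcut (i : Fin (w.length + 1)) :
      ∃ q, FSARun Au (w.take i) s q ∧ FSARun Au (w.drop i) q t :=
    FSARun.exists_of_append (by rwa [List.take_append_drop])
  choose q htake hdrop using hcut
  obtain ⟨i, j, hij, hq⟩ : ∃ i j, i < j ∧ q i = q j := by
    by_contra! hne
    have := Fintype.card_le_of_injective q (Function.Injective.of_lt_imp_ne hne)
    rw [Fintype.card_fin] at this
    omega
  refine ⟨w.take j ++ w.drop i, ?_, (htake j).append (hq ▸ hdrop i)⟩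
  rw [List.length_append, List.length_take, List.length_drop]
  omega

theorem downward_closure_blowup_general [Fintype S] {w : List A} (hw : w ∈ FSALang Au)
    (hmax : ∀ v ∈ FSALang Au, v.length ≤ w.length) : w.length < Fintype.card S := by
  obtain ⟨s, hs, t, ht, hrun⟩ := hw
  by_contra! hcard
  obtain ⟨v, hlonger, hv⟩ := hrun.exists_longer_of_card_le_length hcard
  exact (hmax v ⟨s, hs, t, ht, hv⟩).not_gt hlonger

end

/-- Every finite state automaton over the one-letter alphabet `{a}`
(modelled as `Unit`) recognizing `{a^m : 0 ≤ m ≤ 2^n}` — the downward closure of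
`{a^{2^n}}` with respect to the subword relation — has at least `2^n` states. -/
theorem downward_closure_blowup (n : ℕ) (S : Type) [Fintype S] (Au : FSA S Unit)
    (hlang : FSALang Au = { v | ∃ m ≤ 2 ^ n, v = List.replicate m () }) :
    2 ^ n ≤ Fintype.card S := by
  have hlongest : List.replicate (2 ^ n) () ∈ FSALang Au := hlang ▸ ⟨2 ^ n, le_rfl, rfl⟩
  simpa using (downward_closure_blowup_general hlongest (by simp +contextual [hlang])).le

end DCPSFormal
end
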